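/- arXiv:2605.19486 — 9 statements merged into one kernel-verified Lean document; each statement's English description precedes it below -/
import Mathlib

section
/- Let n > 3 be an integer and let c, d be integers. Suppose either that n is composite, or that n is prime and the Legendre symbol (d/n) equals -1. Then the determinant of the n×n integer matrix whose (i,j) entry (for 0 ≤ i, j ≤ n-1) is (i² + c·i·j + d·j²)^(n-2) is congruent to 0 modulo n². -/
/-!
Write `M` for the matrix in question.

*Composite `n`.* An integer polynomial in `i` expands with integer coefficients in the falling
factorials `i (i-1) ⋯ (i-k+1)`, and for `i < n` only the terms with `k < n` survive. Expanding in
both variables gives `M = L * C * Lᵀ` with `C` integral and `L` lower triangular with diagonal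
`0!, 1!, …, (n-1)!`. Hence `(∏_{k<n} k!)²` divides `det M`. If `n = a * b` is composite and `n > 3`,
then `a ∣ (n-2)!` and `b ∣ (n-1)!`, so `n ∣ ∏_{k<n} k!`.

*Prime `n = p` with `d` a non-residue.* Modulo `p` the rows of `M` satisfy two independent linear
relations. The first is `∑ᵢ i^((p+1)/2) (i² + cij + dj²)^(p-2) = 0`: for `j ≠ 0` the substitution
`i ↦ dj²/i` multiplies the summand by `(dj²)^((p-1)/2) = -1`, and for `j = 0` this is a vanishing
power sum. The second says that the sum of all rows is proportional to row `0`, both being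
multiples of `j^(2p-4)` by homogeneity. Two independent relations modulo `p` make `p²` divide
the determinant.
-/

open Matrix

/-! ### The composite case: falling factorials -/

/-- The lower triangular matrix of falling factorials `i (i-1) ⋯ (i-k+1)`. -/
def fallingMatrix (n : ℕ) : Matrix (Fin n) (Fin n) ℤ :=
  Matrix.of fun i k => ((i.val.descFactorial k.val : ℕ) : ℤ)

/-- The matrix of multiplication by the variable in the falling factorial basis, truncated
to degrees below `n`. -/
def shiftMatrix (n : ℕ) : Matrix (Fin n) (Fin n) ℤ :=
  Matrix.of fun l k => (if l.val = k.val + 1 then 1 else 0) + (if l = k then (k.val : ℤ) else 0)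

lemma mul_descFactorial (i k : ℕ) :
    (i : ℤ) * (i.descFactorial k : ℕ) = (i.descFactorial (k + 1) : ℕ) + k * (i.descFactorial k : ℕ) := by
  rw [Nat.descFactorial_succ]
  rcases le_or_gt k i with h | h
  · push_cast [Nat.cast_sub h]; ring
  · rw [Nat.descFactorial_of_lt h]; simp

lemma diagonal_mul_fallingMatrix (n : ℕ) :
    Matrix.diagonal (fun i : Fin n => (i.val : ℤ)) * fallingMatrix n
      = fallingMatrix n * shiftMatrix n := by
  ext i k
  rw [Matrix.diagonal_mul, Matrix.mul_apply]
  simp only [fallingMatrix, shiftMatrix, Matrix.of_apply, mul_add, Finset.sum_add_distrib]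
  rw [mul_descFactorial]
  congr 1
  · by_cases hk : k.val + 1 < n
    · rw [Finset.sum_eq_single (⟨k.val + 1, hk⟩ : Fin n)]
      · simp
      · intro b _ hb
        rw [if_neg, mul_zero]
        intro h; exact hb (Fin.ext h)
      · simp
    · -- the truncated term is the falling factorial of length `n`, which vanishes at `i < n`
      rw [Nat.descFactorial_of_lt (by have := i.isLt; omega), Finset.sum_eq_zero]
      · simp
      · intro b _
        rw [if_neg, mul_zero]
        have := b.isLt; omega
  · simp [mul_comm]

/-- In the falling factorial basis the matrix of values of the form is `L * C * Lᵀ`. -/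
lemma exists_fallingMatrix_factor (n : ℕ) (hn : 0 < n) (c d : ℤ) (m : ℕ) :
    ∃ C : Matrix (Fin n) (Fin n) ℤ,
      (Matrix.of fun i j : Fin n =>
        ((i.val : ℤ)^2 + c * i.val * j.val + d * (j.val : ℤ)^2)^m)
      = fallingMatrix n * C * (fallingMatrix n)ᵀ := by
  induction m with
  | zero =>
    refine ⟨Matrix.single ⟨0, hn⟩ ⟨0, hn⟩ 1, ?_⟩
    ext i j
    simp [Matrix.mul_apply, Matrix.single_apply, fallingMatrix, ite_and]
  | succ m ih =>
    obtain ⟨C, hC⟩ := ih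
    set D := Matrix.diagonal (fun i : Fin n => (i.val : ℤ)) with hD
    set L := fallingMatrix n with hL
    set T := shiftMatrix n with hT
    have hDL : D * L = L * T := diagonal_mul_fallingMatrix n
    have hLD : Lᵀ * D = Tᵀ * Lᵀ := by
      have := congrArg Matrix.transpose hDL
      rwa [Matrix.transpose_mul, Matrix.transpose_mul, hD, Matrix.diagonal_transpose] at this
    refine ⟨T * T * C + c • (T * C * Tᵀ) + d • (C * Tᵀ * Tᵀ), ?_⟩
    have key : L * (T * T * C + c • (T * C * Tᵀ) + d • (C * Tᵀ * Tᵀ)) * Lᵀ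
        = D * (D * (L * C * Lᵀ)) + c • (D * (L * C * Lᵀ) * D) + d • (L * C * Lᵀ * D * D) := by
      have h1 : D * (D * (L * C * Lᵀ)) = L * (T * T * C) * Lᵀ := by
        calc D * (D * (L * C * Lᵀ)) = D * (D * L) * C * Lᵀ := by simp only [Matrix.mul_assoc]
          _ = (D * L) * T * C * Lᵀ := by rw [hDL, ← Matrix.mul_assoc D L T, hDL]
          _ = _ := by rw [hDL]; simp only [Matrix.mul_assoc]
      have h2 : D * (L * C * Lᵀ) * D = L * (T * C * Tᵀ) * Lᵀ := by
        calc D * (L * C * Lᵀ) * D = (D * L) * C * (Lᵀ * D) := by simp only [Matrix.mul_assoc]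
          _ = _ := by rw [hDL, hLD]; simp only [Matrix.mul_assoc]
      have h3 : L * C * Lᵀ * D * D = L * (C * Tᵀ * Tᵀ) * Lᵀ := by
        calc L * C * Lᵀ * D * D = L * C * (Lᵀ * D) * D := by simp only [Matrix.mul_assoc]
          _ = L * C * Tᵀ * (Lᵀ * D) := by
            conv_lhs => rw [hLD]
            simp only [Matrix.mul_assoc]
          _ = _ := by rw [hLD]; simp only [Matrix.mul_assoc]
      rw [h1, h2, h3]
      simp only [Matrix.mul_add, Matrix.add_mul, Matrix.mul_smul, Matrix.smul_mul]
    rw [key, ← hC]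
    ext i j
    simp only [hD, Matrix.add_apply, Matrix.smul_apply, Matrix.diagonal_mul, Matrix.mul_diagonal,
      Matrix.of_apply, smul_eq_mul]
    ring

lemma det_fallingMatrix (n : ℕ) :
    (fallingMatrix n).det = ∏ k : Fin n, ((k.val.factorial : ℕ) : ℤ) := by
  rw [Matrix.det_of_isLowerTriangular]
  · simp [fallingMatrix, Nat.descFactorial_self]
  · intro i j hij
    have hij' : i.val < j.val := hij
    simp [fallingMatrix, Nat.descFactorial_of_lt hij']

lemma dvd_prod_factorial (n : ℕ) (hn : 3 < n) (h : ¬ n.Prime) :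
    (n : ℤ) ∣ ∏ k : Fin n, ((k.val.factorial : ℕ) : ℤ) := by
  obtain ⟨a, ha, ha2, han⟩ := Nat.exists_dvd_of_not_prime2 (by omega) h
  obtain ⟨b, hb⟩ := ha
  have hb2 : 2 ≤ b := by
    by_contra hlt
    interval_cases b <;> omega
  have ha' : a ≤ n - 2 := by
    have : 2 * a ≤ n := by nlinarith
    omega
  have hb' : b ≤ n - 1 := by
    have : 2 * b ≤ n := by nlinarith
    omega
  have h1 : a ∣ (n - 2).factorial := Nat.dvd_factorial (by omega) ha'
  have h2 : b ∣ (n - 1).factorial := Nat.dvd_factorial (by omega) hb'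
  have h3 : n ∣ ∏ k ∈ Finset.range n, k.factorial := by
    obtain ⟨m, rfl⟩ : ∃ m, n = m + 2 := ⟨n - 2, by omega⟩
    rw [Finset.prod_range_succ, Finset.prod_range_succ, mul_assoc]
    apply Dvd.dvd.mul_left
    have := mul_dvd_mul h1 h2
    rw [← hb] at this
    simpa using this
  rw [Fin.prod_univ_eq_prod_range (fun k => ((k.factorial : ℕ) : ℤ)) n]
  exact_mod_cast h3

lemma composite_case (n : ℕ) (hn : 3 < n) (c d : ℤ) (h : ¬ n.Prime) :
    ((n : ℤ))^2 ∣
      (Matrix.of fun i j : Fin n =>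
        ((i.val : ℤ)^2 + c * i.val * j.val + d * (j.val : ℤ)^2)^(n-2)).det := by
  obtain ⟨C, hC⟩ := exists_fallingMatrix_factor n (by omega) c d (n - 2)
  rw [hC, Matrix.det_mul, Matrix.det_mul, Matrix.det_transpose]
  have h1 := dvd_prod_factorial n hn h
  rw [← det_fallingMatrix] at h1
  have h2 := (mul_dvd_mul h1 h1).mul_right C.det
  rw [sq, mul_right_comm]
  exact h2

/-! ### The prime case: two relations between the rows -/

/-- Two independent relations modulo `p` between the rows of an integer matrix force
`p² ∣ det`; independence is witnessed by the coefficients at two rows `a ≠ b`. -/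
lemma sq_dvd_det_of_relations {p n : ℕ} [Fact p.Prime] (A : Matrix (Fin n) (Fin n) ℤ)
    (u v : Fin n → ℤ) (a b : Fin n) (hua : u a = 1) (hva : v a = 0)
    (hvb : ((v b : ℤ) : ZMod p) ≠ 0)
    (hu : ∀ j, ∑ i, ((u i : ℤ) : ZMod p) * ((A i j : ℤ) : ZMod p) = 0)
    (hv : ∀ j, ∑ i, ((v i : ℤ) : ZMod p) * ((A i j : ℤ) : ZMod p) = 0) :
    (p : ℤ) ^ 2 ∣ A.det := by
  have hu' : ∀ j, (p : ℤ) ∣ ∑ i, u i * A i j := fun j => by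
    rw [← ZMod.intCast_zmod_eq_zero_iff_dvd]; push_cast; exact hu j
  have hv' : ∀ j, (p : ℤ) ∣ ∑ i, v i * A i j := fun j => by
    rw [← ZMod.intCast_zmod_eq_zero_iff_dvd]; push_cast; exact hv j
  choose r hr using hu'
  choose t ht using hv'
  set B := A.updateRow a r with hB
  have h1 : A.det = p * B.det := by
    have h := Matrix.det_updateRow_sum A a u
    rw [hua, one_smul] at h
    rw [← h, hB, ← Matrix.det_updateRow_smul]
    congr 2
    ext j
    simp [Finset.sum_apply, hr j]
  -- row `a` does not enter the second relation, so it also holds for `B`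
  have h2 : v b * B.det = p * (B.updateRow b t).det := by
    have h := Matrix.det_updateRow_sum B b v
    rw [smul_eq_mul] at h
    rw [← h, ← Matrix.det_updateRow_smul]
    congr 2
    ext j
    have : ∑ i, v i * B i j = ∑ i, v i * A i j := by
      refine Finset.sum_congr rfl fun i _ => ?_
      by_cases hi : i = a
      · rw [hi, hva]; simp
      · rw [hB, Matrix.updateRow_ne hi]
    simp [Finset.sum_apply, this, ht j]
  have hp : Prime (p : ℤ) := Nat.prime_iff_prime_int.mp Fact.out
  have h3 : (p : ℤ) ∣ B.det := by
    rcases hp.dvd_or_dvd (Dvd.intro _ h2.symm) with h | h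
    · exact absurd ((ZMod.intCast_zmod_eq_zero_iff_dvd _ _).mpr h) hvb
    · exact h
  rw [h1, pow_two]
  exact mul_dvd_mul_left _ h3

lemma sum_fin_eq_sum_zmod {p : ℕ} [Fact p.Prime] (f : ZMod p → ZMod p) :
    ∑ i : Fin p, f ((i.val : ℕ) : ZMod p) = ∑ x, f x := by
  refine Fintype.sum_bijective (fun i : Fin p => ((i.val : ℕ) : ZMod p)) ?_ _ _ fun _ => rfl
  rw [Fintype.bijective_iff_injective_and_card]
  refine ⟨fun i j hij => ?_, by simp [ZMod.card]⟩
  have := congrArg ZMod.val hij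
  simp only [ZMod.val_cast_of_lt i.isLt, ZMod.val_cast_of_lt j.isLt] at this
  exact Fin.ext this

lemma sum_pow_eq_zero {p : ℕ} [Fact p.Prime] (k : ℕ) (hk : k ≠ 0) (h : ¬ (p - 1) ∣ k) :
    ∑ x : ZMod p, x ^ k = 0 := by
  have h1 := FiniteField.sum_pow_units (ZMod p) k
  rw [ZMod.card, if_neg h] at h1
  rw [← h1, ← Finset.sum_erase (a := (0 : ZMod p)) _ (by simp [hk])]
  symm
  refine Finset.sum_bij (fun x _ => (x : ZMod p)) ?_ ?_ ?_ ?_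
  · intro x _; simp
  · intro x _ y _ hxy; exact Units.ext hxy
  · intro y hy
    exact ⟨Units.mk0 y (Finset.ne_of_mem_erase hy), Finset.mem_univ _, rfl⟩
  · intro x _; rfl

/-- For `j ≠ 0` the sum is odd under the involution `x ↦ e / x` with `e = d j²` a non-residue. -/
lemma first_relation {p : ℕ} [Fact p.Prime] (hp : 3 < p) (c d : ZMod p)
    (hd : d ^ (p / 2) = -1) (j : ZMod p) :
    ∑ x : ZMod p, x ^ (p / 2 + 1) * (x ^ 2 + c * x * j + d * j ^ 2) ^ (p - 2) = 0 := by
  have hodd : p % 2 = 1 := (Fact.out : p.Prime).eq_two_or_odd.resolve_left (by omega)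
  obtain ⟨q, hq⟩ : ∃ q, p = 2 * q + 1 := ⟨p / 2, by omega⟩
  have hq2 : p / 2 = q := by omega
  rw [hq2] at hd ⊢
  have h2 : (2 : ZMod p) ≠ 0 := by
    intro h
    have : ((2 : ℕ) : ZMod p) = 0 := by exact_mod_cast h
    rw [ZMod.natCast_eq_zero_iff] at this
    have := Nat.le_of_dvd (by norm_num) this
    omega
  have hfermat : ∀ x : ZMod p, x ≠ 0 → x ^ (2 * q) = 1 := fun x hx => by
    have := ZMod.pow_card_sub_one_eq_one hx
    rwa [show p - 1 = 2 * q by omega] at this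
  by_cases hj : j = 0
  · subst hj
    have : ∀ x : ZMod p, x ^ (q + 1) * (x ^ 2 + c * x * 0 + d * 0 ^ 2) ^ (p - 2)
        = x ^ (q + 1 + 2 * (p - 2)) := fun x => by
      rw [pow_add x (q + 1), pow_mul]; simp
    rw [Finset.sum_congr rfl fun x _ => this x]
    apply sum_pow_eq_zero _ (by omega)
    -- the exponent is `5q - 1`, strictly between `2 (2q)` and `3 (2q)`
    rintro ⟨k, hk⟩
    have hk' : 5 * q - 1 = 2 * q * k := by
      rw [show 2 * q = p - 1 by omega, ← hk]; omega
    have hk2 : 2 < k := by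
      by_contra hlt
      have : k ≤ 2 := by omega
      have := Nat.mul_le_mul_left (2 * q) this
      omega
    have := Nat.mul_le_mul_left (2 * q) (show 3 ≤ k from hk2)
    omega
  · have hd0 : d ≠ 0 := by
      rintro rfl
      rw [zero_pow (by omega)] at hd
      exact one_ne_zero (neg_eq_zero.mp hd.symm)
    set e := d * j ^ 2 with he
    have he0 : e ≠ 0 := mul_ne_zero hd0 (pow_ne_zero _ hj)
    have heq : e ^ q = -1 := by
      rw [he, mul_pow, hd, ← pow_mul, hfermat j hj, mul_one]
    set S := ∑ x : ZMod p, x ^ (q + 1) * (x ^ 2 + c * x * j + e) ^ (p - 2) with hS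
    have hinv : S = -S := by
      have hbij : Function.Bijective (fun x : ZMod p => e * x⁻¹) :=
        (Equiv.mulLeft₀ e he0).bijective.comp inv_involutive.bijective
      rw [hS, ← Finset.sum_neg_distrib]
      refine Fintype.sum_bijective _ hbij _ _ fun x => ?_
      by_cases hx : x = 0
      · subst hx; simp
      · have hQ : (e * x⁻¹) ^ 2 + c * (e * x⁻¹) * j + e
            = e * (x⁻¹) ^ 2 * (x ^ 2 + c * x * j + e) := by
          field_simp
          ring
        rw [hQ, mul_pow _ (x ^ 2 + c * x * j + e)]
        have hcoef : (e * x⁻¹) ^ (q + 1) * (e * (x⁻¹) ^ 2) ^ (p - 2) = - x ^ (q + 1) := by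
          have hx1 := hfermat x hx
          have e1 : (e * x⁻¹) ^ (q + 1) * (e * (x⁻¹) ^ 2) ^ (p - 2)
              = e ^ (q + 1 + (p - 2)) * (x⁻¹) ^ (q + 1 + 2 * (p - 2)) := by
            rw [mul_pow, mul_pow, ← pow_mul, pow_add, pow_add]; ring
          have e2 : e ^ (q + 1 + (p - 2)) = -1 := by
            rw [show q + 1 + (p - 2) = q + 2 * q by omega, pow_add, heq, hfermat e he0, mul_one]
          have e3 : (x⁻¹) ^ (q + 1 + 2 * (p - 2)) = x ^ (q + 1) := by
            rw [inv_pow, inv_eq_iff_eq_inv, eq_comm, inv_eq_iff_eq_inv]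
            apply eq_inv_of_mul_eq_one_left
            rw [← pow_add, show q + 1 + (q + 1 + 2 * (p - 2)) = 2 * q * 3 by omega, pow_mul, hx1,
              one_pow]
          rw [e1, e2, e3]; ring
        linear_combination (x ^ 2 + c * x * j + e) ^ (p - 2) * hcoef
    have : 2 * S = 0 := by linear_combination hinv
    exact (mul_eq_zero.mp this).resolve_left h2

/-- Both the sum of all rows and row `0` are homogeneous in `j` of degree `2 (p - 2)`. -/
lemma second_relation {p : ℕ} [Fact p.Prime] (hp : 3 < p) (c d : ZMod p) (hd : d ≠ 0) :
    ∃ e : ZMod p, ∀ j : ZMod p,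
      ∑ x : ZMod p, (x ^ 2 + c * x * j + d * j ^ 2) ^ (p - 2) + e * (d * j ^ 2) ^ (p - 2) = 0 := by
  set S := ∑ x : ZMod p, (x ^ 2 + c * x + d) ^ (p - 2) with hS
  refine ⟨-S * (d ^ (p - 2))⁻¹, fun j => ?_⟩
  by_cases hj : j = 0
  · subst hj
    have : ∀ x : ZMod p, (x ^ 2 + c * x * 0 + d * 0 ^ 2) ^ (p - 2) = x ^ (2 * (p - 2)) := fun x => by
      rw [pow_mul]; ring_nf
    rw [Finset.sum_congr rfl fun x _ => this x, sum_pow_eq_zero _ (by omega)]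
    · rw [zero_pow two_ne_zero, mul_zero, zero_pow (by omega), mul_zero, add_zero]
    · rintro ⟨k, hk⟩
      have hk2 : 1 < k := by
        by_contra hlt
        have := Nat.mul_le_mul_left (p - 1) (show k ≤ 1 by omega)
        omega
      have := Nat.mul_le_mul_left (p - 1) (show 2 ≤ k from hk2)
      omega
  · have h1 : ∑ x : ZMod p, (x ^ 2 + c * x * j + d * j ^ 2) ^ (p - 2)
        = (j ^ 2) ^ (p - 2) * S := by
      rw [hS, Finset.mul_sum]
      symm
      refine Fintype.sum_bijective _ (Equiv.mulLeft₀ j hj).bijective _ _ fun x => ?_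
      simp only [Equiv.mulLeft₀_apply]
      rw [← mul_pow]; ring
    have h2 : d ^ (p - 2) ≠ 0 := pow_ne_zero _ hd
    rw [h1, mul_pow]
    field_simp
    ring

lemma two_pow_ne_one {p : ℕ} [Fact p.Prime] (hp : 3 < p) : (2 : ZMod p) ^ (p / 2 + 1) ≠ 1 := by
  intro h
  have hodd : p % 2 = 1 := (Fact.out : p.Prime).eq_two_or_odd.resolve_left (by omega)
  -- squaring gives `2 ^ (p + 1) = 4`, so `4 = 1`
  have h1 : (2 : ZMod p) ^ (p + 1) = 1 := by
    rw [show p + 1 = (p / 2 + 1) * 2 by omega, pow_mul, h, one_pow]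
  rw [pow_succ, ZMod.pow_card] at h1
  have h3 : ((3 : ℕ) : ZMod p) = 0 := by push_cast; linear_combination h1
  rw [ZMod.natCast_eq_zero_iff] at h3
  have := Nat.le_of_dvd (by norm_num) h3
  omega

lemma prime_case (n : ℕ) [Fact n.Prime] (hn : 3 < n) (c d : ℤ) (h : legendreSym n d = -1) :
    ((n : ℤ))^2 ∣
      (Matrix.of fun i j : Fin n =>
        ((i.val : ℤ)^2 + c * i.val * j.val + d * (j.val : ℤ)^2)^(n-2)).det := by
  have hd : (d : ZMod n) ^ (n / 2) = -1 := by
    rw [← legendreSym.eq_pow, h]; simp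
  have hd0 : (d : ZMod n) ≠ 0 := by
    intro h0
    rw [h0, zero_pow (by omega)] at hd
    exact one_ne_zero (neg_eq_zero.mp hd.symm)
  obtain ⟨e, he⟩ := second_relation hn (c : ZMod n) d hd0
  have hu : ∀ j : Fin n, ∑ i : Fin n, (((i.val : ℤ) ^ (n / 2 + 1) : ℤ) : ZMod n) *
      ((((i.val : ℤ)^2 + c * i.val * j.val + d * (j.val : ℤ)^2)^(n-2) : ℤ) : ZMod n) = 0 := by
    intro j
    rw [← first_relation hn (c : ZMod n) d hd (j.val : ZMod n), ← sum_fin_eq_sum_zmod]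
    push_cast
    rfl
  let z : Fin n := ⟨0, by omega⟩
  -- the difference of the two relations has coefficient `0` at row `1`
  refine sq_dvd_det_of_relations (p := n) _ (fun i => (i.val : ℤ) ^ (n / 2 + 1))
    (fun i => 1 + (if i = z then (e.val : ℤ) else 0) - (i.val : ℤ) ^ (n / 2 + 1))
    ⟨1, by omega⟩ ⟨2, by omega⟩ (by simp) ?_ ?_ hu ?_
  · simp [z]
  · have := two_pow_ne_one (p := n) hn
    simp only [z, Fin.mk.injEq, OfNat.ofNat_ne_zero, if_false]
    push_cast
    intro h0
    exact this (by linear_combination -h0)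
  · intro j
    have h1 := hu j
    have h2 := he (j.val : ZMod n)
    rw [← sum_fin_eq_sum_zmod] at h2
    simp only [Matrix.of_apply]
    have h3 : ∀ i : Fin n, ((1 + (if i = z then (e.val : ℤ) else 0)
          - (i.val : ℤ) ^ (n / 2 + 1) : ℤ) : ZMod n) *
        ((((i.val : ℤ)^2 + c * i.val * j.val + d * (j.val : ℤ)^2)^(n-2) : ℤ) : ZMod n)
      = ((i.val : ZMod n)^2 + c * i.val * j.val + d * (j.val : ZMod n)^2)^(n-2)
        + (if i = z then e * (d * (j.val : ZMod n)^2)^(n-2) else 0)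
        - (((i.val : ℤ) ^ (n / 2 + 1) : ℤ) : ZMod n) *
      ((((i.val : ℤ)^2 + c * i.val * j.val + d * (j.val : ℤ)^2)^(n-2) : ℤ) : ZMod n) := by
      intro i
      by_cases hi : i = z
      · subst hi
        simp [z]
        ring
      · simp [hi]
        ring
    rw [Finset.sum_congr rfl fun i _ => h3 i, Finset.sum_sub_distrib, h1, Finset.sum_add_distrib,
      Finset.sum_ite_eq' Finset.univ z, if_pos (Finset.mem_univ _), sub_zero]
    exact h2

theorem sun_determinant_congruence (n : ℕ) (hn : 3 < n) (c d : ℤ)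
    (h : ¬ n.Prime ∨ ∃ hp : n.Prime, @legendreSym n ⟨hp⟩ d = -1) :
    ((n : ℤ))^2 ∣
      (Matrix.of fun i j : Fin n =>
        ((i.val : ℤ)^2 + c * i.val * j.val + d * (j.val : ℤ)^2)^(n-2)).det := by
  rcases h with h | ⟨hp, h⟩
  · exact composite_case n hn c d h
  · have : Fact n.Prime := ⟨hp⟩
    exact prime_case n hn c d h
end

section
/- Let n > 3 be a composite integer. Then for all integers c, d, the determinant of the n×n integer matrix whose (i,j) entry (for 0 ≤ i, j ≤ n-1) is (i² + c·i·j + d·j²)^(n-2) is congruent to 0 modulo n². -/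
/-!
The entries are values of integer polynomials in the row index, so rows whose indices agree modulo a
prime `p ≤ n` agree modulo `p`.  Subtracting from each row `i ≥ p` the row `i % p` makes it a
multiple of `p`, hence `p ^ (n - p)` divides the determinant (`pow_sub_dvd_det`).  If `p ^ a` is
the exact power of `p` dividing a composite `n ≠ 4`, then `2 * a ≤ n - p` (`two_mul_le_sub`), so
every prime power dividing `n ^ 2` divides the determinant.  For `n = 4` the
determinant, expanded as a polynomial in `c` and `d`, has all coefficients divisible by `16`.
-/

/-- If rows with indices congruent modulo `p` are congruent modulo `p`, the determinant is divisible
by `p ^ (n - p)`: the matrix factors through a lower triangular matrix whose diagonal consists of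
`p` ones followed by `n - p` copies of `p`. -/
lemma pow_sub_dvd_det (n p : ℕ) (hp : 0 < p) (hpn : p ≤ n) (M : Matrix (Fin n) (Fin n) ℤ)
    (hM : ∀ i k j : Fin n, (k : ℕ) = i % p → (p : ℤ) ∣ M i j - M k j) :
    (p : ℤ) ^ (n - p) ∣ M.det := by
  let r : Fin n → Fin n := fun i => ⟨i % p, (Nat.mod_lt _ hp).trans_le hpn⟩
  have h : ∀ i j, ∃ t, M i j - M (r i) j = p * t := fun i j => hM i (r i) j rfl
  choose t ht using h
  let L : Matrix (Fin n) (Fin n) ℤ := Matrix.of fun i k =>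
    if (i : ℕ) < p then (if k = i then 1 else 0)
    else (if k = i then (p : ℤ) else 0) + (if k = r i then 1 else 0)
  let N : Matrix (Fin n) (Fin n) ℤ := Matrix.of fun i j => if (i : ℕ) < p then M i j else t i j
  have hLN : M = L * N := by
    ext i j
    have hr : ((r i : Fin n) : ℕ) < p := Nat.mod_lt _ hp
    by_cases hi : (i : ℕ) < p
    · simp only [L, N, Matrix.mul_apply, hi, Matrix.of_apply, if_true, ite_mul, zero_mul, one_mul,
        Finset.sum_ite_eq', Finset.mem_univ]
    · simp only [L, N, Matrix.mul_apply, hi, Matrix.of_apply, if_false, add_mul,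
        Finset.sum_add_distrib, ite_mul, zero_mul, one_mul, Finset.sum_ite_eq',
        Finset.mem_univ, if_true, hr]
      linarith [ht i j]
  have hL : L.det = (p : ℤ) ^ (n - p) := by
    rw [Matrix.det_of_isLowerTriangular]
    · have hd : ∀ i : Fin n, L i i = (fun m : ℕ => if m < p then (1 : ℤ) else p) i := by
        intro i
        by_cases hi : (i : ℕ) < p
        · simp [L, hi]
        · have : i ≠ r i := fun h => hi (by
            have h2 : (i : ℕ) = i % p := congrArg Fin.val h
            rw [h2]; exact Nat.mod_lt _ hp)
          simp [L, hi, this]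
      rw [Finset.prod_congr rfl fun i _ => hd i,
        Fin.prod_univ_eq_prod_range (fun m : ℕ => if m < p then (1 : ℤ) else p) n]
      obtain ⟨m, rfl⟩ := Nat.exists_eq_add_of_le hpn
      rw [Finset.prod_range_add]
      rw [Finset.prod_eq_one fun i hi => if_pos (Finset.mem_range.mp hi)]
      simp
    · intro i k hik
      have hik : i < k := hik
      have h1 : k ≠ i := hik.ne'
      have h2 : k ≠ r i := fun h => by
        have h3 : (k : ℕ) = i % p := congrArg Fin.val h
        have h4 := Nat.mod_le (i : ℕ) p
        have h5 : (i : ℕ) < k := hik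
        omega
      simp [L, h1, h2]
  rw [hLN, Matrix.det_mul, hL]
  exact dvd_mul_right _ _

lemma two_mul_le_sub (n p a : ℕ) (hp : p.Prime) (hn : ¬ n.Prime) (h0 : 0 < n) (h4 : n ≠ 4)
    (ha : 0 < a) (hd : p ^ a ∣ n) : 2 * a ≤ n - p := by
  obtain ⟨m, rfl⟩ := hd
  have hp2 := hp.two_le
  have hm : 0 < m := Nat.pos_of_mul_pos_left h0
  obtain ⟨b, rfl⟩ : ∃ b, a = b + 1 := ⟨a - 1, by omega⟩
  suffices 2 * (b + 1) + p ≤ p ^ (b + 1) * m by omega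
  rcases Nat.eq_zero_or_pos b with rfl | hb
  · have : m ≠ 1 := by rintro rfl; simp [hp] at hn
    have : 2 ≤ m := by omega
    simp only [zero_add, pow_one]
    nlinarith
  · rcases hp2.eq_or_lt with rfl | hp3
    · by_cases hb1 : b = 1
      · subst hb1; omega
      · obtain ⟨e, rfl⟩ : ∃ e, b = e + 2 := ⟨b - 2, by omega⟩
        have h1 : e < 2 ^ e := Nat.lt_two_pow_self
        have h2 : 2 ^ (e + 2 + 1) ≤ 2 ^ (e + 2 + 1) * m := Nat.le_mul_of_pos_right _ hm
        have h3 : 2 ^ (e + 2 + 1) = 8 * 2 ^ e := by ring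
        omega
    · have h1 : 1 + b * 2 ≤ p ^ b := by
        have h := one_add_mul_le_pow (a := (2 : ℤ)) (by norm_num) b
        have h' : 1 + b * 2 ≤ 3 ^ b := by exact_mod_cast h
        exact h'.trans (Nat.pow_le_pow_left hp3 b)
      have h2 : p ^ (b + 1) ≤ p ^ (b + 1) * m := Nat.le_mul_of_pos_right _ hm
      have h3 : p * (1 + b * 2) ≤ p ^ (b + 1) := by
        rw [pow_succ']; exact Nat.mul_le_mul_left p h1
      nlinarith

lemma sixteen_dvd_det (c d : ℤ) :
    (16 : ℤ) ∣ (Matrix.of fun i j : Fin 4 =>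
        ((i.val : ℤ)^2 + c * i.val * j.val + d * (j.val : ℤ)^2)^2).det := by
  refine ⟨1296 * c * d ^ 3 + 648 * c ^ 3 * d ^ 2 + 4356 * c ^ 2 * d ^ 3 + 1296 * c * d ^ 4
    + 648 * c ^ 3 * d ^ 3, ?_⟩
  simp [Matrix.det_succ_row_zero, Fin.sum_univ_succ, Fin.succAbove]
  ring

theorem sun_determinant_composite (n : ℕ) (hn : 3 < n) (hcomp : ¬ n.Prime) (c d : ℤ) :
    ((n : ℤ))^2 ∣
      (Matrix.of fun i j : Fin n =>
        ((i.val : ℤ)^2 + c * i.val * j.val + d * (j.val : ℤ)^2)^(n-2)).det := by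
  by_cases h4 : n = 4
  · subst h4
    simpa using sixteen_dvd_det c d
  rw [← Nat.cast_pow, Int.natCast_dvd, Nat.dvd_iff_prime_pow_dvd_dvd]
  intro p k hp hk
  rcases Nat.eq_zero_or_pos k with rfl | hk0
  · simp
  have hpn : p ∣ n := hp.dvd_of_dvd_pow ((dvd_pow_self p hk0.ne').trans hk)
  have hle : k ≤ n - p := by
    have h1 : k ≤ 2 * n.factorization p := by
      have := (hp.pow_dvd_iff_le_factorization (pow_ne_zero 2 (by omega))).mp hk
      simpa using this
    refine h1.trans (two_mul_le_sub n p _ hp hcomp (by omega) h4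
      (hp.factorization_pos_of_dvd (by omega) hpn) (Nat.ordProj_dvd n p))
  rw [← Int.natCast_dvd, Nat.cast_pow]
  refine (pow_dvd_pow _ hle).trans (pow_sub_dvd_det n p hp.pos (Nat.le_of_dvd (by omega) hpn) _ ?_)
  intro i k j hik
  have hmod : (k : ℤ) ≡ i [ZMOD p] := by
    rw [hik]; push_cast; exact Int.mod_modEq _ _
  simp only [Matrix.of_apply]
  exact (((hmod.pow 2).add ((hmod.mul_left c).mul_right _)).add_right _ |>.pow (n - 2)).dvd
end

section
/- Let R be a commutative ring, let N ≥ 0, and let G be a polynomial in R[x_0, …, x_{N-1}] that is alternating in the sense that for every pair of indices r < s, substituting x_s := x_r into G yields the zero polynomial. Then the Vandermonde product ∏_{0 ≤ r < s ≤ N-1} (x_s − x_r) divides G in R[x_0, …, x_{N-1}]. -/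
/-!
The linear factors `X s - X r` are split off `G` one at a time. Suppose `G = P * H`, where `P` is a
product of factors `X q.2 - X q.1` over pairs other than `(r, s)`. Substituting `x_s := x_r`
turns each of these factors into some `X a - X b` with `a ≠ b`. Over an arbitrary commutative ring,
such a difference is still a non-zero-divisor (`eq_zero_of_X_sub_X_mul`), so the vanishing of `G`
under the substitution forces that of `H`, and the factor theorem (`X_sub_X_dvd_of_rename`) shows
that `X s - X r` divides `H`.
-/

open MvPolynomial in
/-- If `X a * H = X b * H`, the coefficient of `H` at `m` equals the one at `m + e_a - e_b`, and
vanishes when `x_b` does not occur in `m`; hence all coefficients vanish by induction on `m b`. -/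
theorem eq_zero_of_X_sub_X_mul {R σ : Type*} [CommRing R] {a b : σ} (hab : a ≠ b)
    {H : MvPolynomial σ R} (h : (X a - X b) * H = 0) : H = 0 := by
  classical
  have h' : H * X a = H * X b := by linear_combination h
  have key : ∀ n : ℕ, ∀ m : σ →₀ ℕ, m b = n → coeff m H = 0 := by
    intro n
    induction n with
    | zero =>
      intro m hm
      have := congrArg (coeff (m + Finsupp.single a 1)) h'
      rw [coeff_mul_X, coeff_mul_X', if_neg] at this
      · exact this
      · simp [hm, hab]
    | succ n ih =>
      intro m hm
      have := congrArg (coeff (m + Finsupp.single a 1)) h'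
      rw [coeff_mul_X, coeff_mul_X', if_pos] at this
      · rw [this]
        apply ih
        simp [hm, hab]
      · simp [hm]
  ext m
  simpa using key _ m rfl

open MvPolynomial in
/-- Factor theorem: modulo `X s - X r`, the substitution `x_s := x_r` is the identity. -/
theorem X_sub_X_dvd_of_rename {R σ : Type*} [CommRing R] [DecidableEq σ] (r s : σ)
    {H : MvPolynomial σ R} (h : rename (fun i => if i = s then r else i) H = 0) :
    (X s - X r) ∣ H := by
  rw [← Ideal.mem_span_singleton, ← Ideal.Quotient.eq_zero_iff_mem]
  let I : Ideal (MvPolynomial σ R) := Ideal.span {X s - X r}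
  have hhom : (Ideal.Quotient.mkₐ R I).comp (rename (fun i => if i = s then r else i)) =
      Ideal.Quotient.mkₐ R I := by
    ext i
    by_cases hi : i = s
    · subst hi
      simp only [AlgHom.comp_apply, rename_X, if_true, Ideal.Quotient.mkₐ_eq_mk]
      exact (Ideal.Quotient.eq.mpr (Ideal.mem_span_singleton_self _)).symm
    · simp [hi]
  have := DFunLike.congr_fun hhom H
  rw [AlgHom.comp_apply, h, map_zero] at this
  exact this.symm

open MvPolynomial in
theorem vandermonde_divides_alternating {R : Type*} [CommRing R] (N : ℕ)
    (G : MvPolynomial (Fin N) R)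
    (halt : ∀ r s : Fin N, r < s →
      MvPolynomial.rename (fun i => if i = s then r else i) G = 0) :
    (∏ q ∈ Finset.univ.filter (fun q : Fin N × Fin N => q.1 < q.2),
        (X q.2 - X q.1 : MvPolynomial (Fin N) R)) ∣ G := by
  have key : ∀ S : Finset (Fin N × Fin N), (∀ q ∈ S, q.1 < q.2) →
      (∏ q ∈ S, (X q.2 - X q.1 : MvPolynomial (Fin N) R)) ∣ G := by
    intro S
    induction S using Finset.induction_on with
    | empty => simp
    | insert p S hp ih =>
      intro hS
      obtain ⟨H, hH⟩ := ih fun q hq => hS q (Finset.mem_insert_of_mem hq)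
      obtain ⟨r, s⟩ := p
      have hrs : r < s := hS (r, s) (Finset.mem_insert_self _ _)
      have h0 := halt r s hrs
      rw [hH, map_mul, map_prod] at h0
      -- The substituted factors are cancelled one after another.
      have cancel : ∀ T ⊆ S, ∀ K : MvPolynomial (Fin N) R,
          (∏ q ∈ T, rename (fun i => if i = s then r else i)
            (X q.2 - X q.1 : MvPolynomial (Fin N) R)) * K = 0 → K = 0 := by
        intro T
        induction T using Finset.induction_on with
        | empty => simp
        | insert q T hq ihT =>
          intro hTS K hK
          rw [Finset.prod_insert hq, mul_assoc, map_sub, rename_X, rename_X] at hK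
          refine ihT (fun x hx => hTS (Finset.mem_insert_of_mem hx)) K
            (eq_zero_of_X_sub_X_mul ?_ hK)
          have hqS : q ∈ S := hTS (Finset.mem_insert_self _ _)
          have hlt := hS q (Finset.mem_insert_of_mem hqS)
          have hne : ¬ (q.1 = r ∧ q.2 = s) := by
            rintro ⟨h1, h2⟩
            exact hp (by rw [← h1, ← h2]; exact hqS)
          -- As `r < s` and `q.1 < q.2`, only `q = (r, s)` has its two indices identified.
          split_ifs <;> grind
      obtain ⟨K, hK⟩ := X_sub_X_dvd_of_rename r s (cancel S subset_rfl _ h0)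
      refine ⟨K, ?_⟩
      rw [Finset.prod_insert hp, hH, hK]
      ring
  exact key _ (by simp)
end

section
/- Let p ≥ 3 be a prime and let c, d be integers with Legendre symbol (d/p) = -1. In the polynomial ring 𝔽_p[T], write (T² + cT + d)^(p-2) = Σ_{a=0}^{2p-4} α_a T^a, where α_a ∈ 𝔽_p denotes the coefficient of T^a (here c and d are identified with their residues in 𝔽_p). If m = (p-3)/2, then α_m + α_{m+p-1} = 0 in 𝔽_p. -/
/-!
The quadratic `f = X² + cX + d` satisfies `f(dX) = d · f.reverse`. Raising this to the power `n`
and comparing coefficients gives the symmetry `α_a d^a = d^n α_{2n-a}` for the coefficients of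
`f ^ n`. For `n = p - 2` and `a = m = (p-3)/2` one has `2n - a = m + p - 1` and
`n - a = (p-1)/2`, and `d ^ ((p-1)/2) = -1` by Euler's criterion, so `α_m = -α_{m+p-1}`.
-/

open Polynomial

lemma natDegree_monic_quadratic {R : Type*} [CommRing R] [Nontrivial R] (c d : R) :
    (X ^ 2 + C c * X + C d : R[X]).natDegree = 2 := by
  compute_degree!

lemma reverse_monic_quadratic {R : Type*} [CommRing R] [Nontrivial R] (c d : R) :
    (X ^ 2 + C c * X + C d : R[X]).reverse = 1 + C c * X + C d * X ^ 2 := by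
  have h1 : reflect 2 (X ^ 2 : R[X]) = 1 := by
    simpa using reflect_monomial (R := R) 2 2
  have h2 : reflect 2 (C c * X : R[X]) = C c * X := by
    simpa [revAt_le] using reflect_C_mul_X_pow (R := R) 2 1 (c := c)
  rw [reverse, natDegree_monic_quadratic, reflect_add, reflect_add, h1, h2, reflect_C]

lemma reverse_pow_of_isDomain {R : Type*} [CommRing R] [IsDomain R] (f : R[X]) (n : ℕ) :
    (f ^ n).reverse = f.reverse ^ n := by
  induction n with
  | zero => simpa using reverse_C (1 : R)
  | succ n ih => rw [pow_succ, pow_succ, reverse_mul_of_domain, ih]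

/-- The twisted palindromic symmetry of the coefficients of a power of a monic quadratic, coming
from the substitution `X ↦ d / X`. -/
lemma coeff_quadratic_pow_symm {R : Type*} [CommRing R] [IsDomain R] (c d : R) {n a : ℕ}
    (ha : a ≤ 2 * n) :
    ((X ^ 2 + C c * X + C d : R[X]) ^ n).coeff a * d ^ a
      = d ^ n * ((X ^ 2 + C c * X + C d : R[X]) ^ n).coeff (2 * n - a) := by
  have hcomp : (X ^ 2 + C c * X + C d : R[X]).comp (C d * X)
      = C d * (X ^ 2 + C c * X + C d : R[X]).reverse := by
    rw [reverse_monic_quadratic]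
    simp
    ring
  have hdeg : ((X ^ 2 + C c * X + C d : R[X]) ^ n).natDegree = 2 * n := by
    rw [natDegree_pow, natDegree_monic_quadratic, mul_comm]
  have h := congrArg (fun q => (q ^ n).coeff a) hcomp
  simp only [← pow_comp, mul_pow, ← reverse_pow_of_isDomain, ← C_pow, coeff_C_mul,
    comp_C_mul_X_coeff, coeff_reverse, hdeg, revAt_le ha] at h
  exact h

open Polynomial in
theorem critical_coefficient_cancellation (p : ℕ) (hp : p.Prime) (hp3 : 3 ≤ p)
    (c d : ℤ) (hd : @legendreSym p ⟨hp⟩ d = -1) :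
    (((X^2 + C (c : ZMod p) * X + C (d : ZMod p))^(p-2)).coeff ((p-3)/2)
      + ((X^2 + C (c : ZMod p) * X + C (d : ZMod p))^(p-2)).coeff ((p-3)/2 + (p-1)))
      = 0 := by
  haveI : Fact p.Prime := ⟨hp⟩
  have hodd : p % 2 = 1 := hp.eq_two_or_odd.resolve_left (by omega)
  have heuler : (d : ZMod p) ^ (p / 2) = -1 := by
    rw [← legendreSym.eq_pow p d, hd]
    simp
  have hd0 : (d : ZMod p) ≠ 0 := by
    intro h
    rw [(legendreSym.eq_zero_iff p d).2 h] at hd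
    norm_num at hd
  have hsymm := coeff_quadratic_pow_symm (c : ZMod p) (d : ZMod p)
    (n := p - 2) (a := (p - 3) / 2) (by omega)
  have hidx : 2 * (p - 2) - (p - 3) / 2 = (p - 3) / 2 + (p - 1) := by omega
  have hexp : (d : ZMod p) ^ (p - 2) = - (d : ZMod p) ^ ((p - 3) / 2) := by
    rw [show p - 2 = (p - 3) / 2 + p / 2 by omega, pow_add, heuler, mul_neg_one]
  rw [hidx, hexp] at hsymm
  refine (mul_eq_zero.1 ?_).resolve_left (pow_ne_zero ((p - 3) / 2) hd0)
  linear_combination hsymm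
end

section
/- Let p > 3 be a prime and let c, d be integers with Legendre symbol (d/p) = -1 (c and d are identified with their residues in 𝔽_p). Let C = (C_{r,s})_{0 ≤ r,s ≤ p-1} be a p×p matrix over 𝔽_p such that for all x, y ∈ 𝔽_p one has Σ_{0 ≤ r,s ≤ p-1} C_{r,s} x^r y^s = (x² + c·x·y + d·y²)^(p-2). Then the rank of C over 𝔽_p is at most p − 2. -/
/-!
Since `t ^ (p - 2) = t⁻¹` for every `t` in `𝔽_p` (with `0⁻¹ = 0`), the function represented by `C`
is `1 / q` with `q(x, y) = x² + c x y + d y²`. Writing `F_s(x) = ∑ r, C r s * x ^ r`, power sums over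
`𝔽_p` extract the columns of `C` as functions of `x`:

* `F_0(x) = q(x, 0)⁻¹ = x⁻²`, and `F_{p-1}(x) = -∑ y, q(x, y)⁻¹`, which by the substitution `y = x z`
  is a constant multiple of `x⁻²`. So column `p - 1` is a multiple of column `0`.
* For `m = (p - 3) / 2`, `F_m(x) = -∑ y, y ^ ((p + 1) / 2) * q(x, y)⁻¹`. The substitution
  `y ↦ x² / (d y)` multiplies the summand by `d ^ ((p - 1) / 2) = (d/p) = -1`, so the sum vanishes
  and column `m` is zero.

A polynomial of degree less than `p` is determined by its values on `𝔽_p`, so these are identities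
between columns, and the column space is spanned by the `p - 2` columns other than `m` and `p - 1`.
-/

/-- A polynomial function of degree less than `p` vanishing on `𝔽_p` has zero coefficients. -/
lemma coeff_eq_zero_of_forall_eval (p : ℕ) [Fact p.Prime] (v : Fin p → ZMod p)
    (h : ∀ x : ZMod p, ∑ r : Fin p, v r * x ^ (r : ℕ) = 0) : v = 0 := by
  have hinj : Function.Injective (fun i : Fin p => ((i : ℕ) : ZMod p)) := by
    intro i j hij
    have h1 := congrArg ZMod.val hij
    simp only [ZMod.val_natCast_of_lt i.2, ZMod.val_natCast_of_lt j.2] at h1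
    exact Fin.ext h1
  exact Matrix.eq_zero_of_forall_index_sum_mul_pow_eq_zero hinj (fun j => by
    simpa using h ((j : ℕ) : ZMod p))

lemma sum_pow_eq_ite (p : ℕ) [Fact p.Prime] (i : ℕ) (hi : i ≠ 0) :
    ∑ y : ZMod p, y ^ i = if p - 1 ∣ i then -1 else 0 := by
  have h := FiniteField.sum_pow_units (ZMod p) i
  rw [ZMod.card] at h
  rw [← h]
  have hmap : Finset.univ.map ⟨fun u : (ZMod p)ˣ => (u : ZMod p), Units.val_injective⟩
      = Finset.univ \ {(0 : ZMod p)} := by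
    ext y
    simpa only [Finset.mem_map, Finset.mem_univ, Function.Embedding.coeFn_mk, true_and,
      Finset.mem_sdiff, Finset.mem_singleton] using! isUnit_iff_ne_zero
  rw [← Finset.sum_sdiff (Finset.subset_univ {(0 : ZMod p)}), Finset.sum_singleton, zero_pow hi,
    add_zero, ← hmap, Finset.sum_map]
  rfl

/-- Extraction of the coefficient of `y ^ s`, where `0 < s`, by a power sum. -/
lemma sum_pow_mul_eval (p : ℕ) [Fact p.Prime] (hp3 : 3 < p) (v : Fin p → ZMod p) (s : Fin p)
    (hs : 0 < (s : ℕ)) :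
    ∑ y : ZMod p, y ^ (p - 1 - (s : ℕ)) * ∑ t : Fin p, v t * y ^ (t : ℕ) = - v s := by
  have h1 : ∀ t : Fin p, ∑ y : ZMod p, y ^ (p - 1 - (s : ℕ) + (t : ℕ))
      = if t = s then -1 else 0 := by
    intro t
    have hs' := s.2
    have ht' := t.2
    by_cases h0 : p - 1 - (s : ℕ) + (t : ℕ) = 0
    · have : t ≠ s := by rintro rfl; omega
      rw [h0]
      simp [this]
    · rw [sum_pow_eq_ite p _ h0]
      have : p - 1 ∣ p - 1 - (s : ℕ) + (t : ℕ) ↔ t = s := by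
        constructor
        · rintro ⟨k, hk⟩
          have hk1 : k = 1 := by
            rcases k with _ | _ | k
            · omega
            · rfl
            · exfalso
              have : (p - 1) * (k + 1 + 1) = (p - 1) * k + 2 * (p - 1) := by ring
              have h3 := Nat.zero_le ((p - 1) * k)
              omega
          subst hk1
          apply Fin.ext; omega
        · rintro rfl
          rw [show p - 1 - (t : ℕ) + t = p - 1 by omega]
      simp only [this]
  simp_rw [Finset.mul_sum]
  rw [Finset.sum_comm]
  have h2 : ∀ t : Fin p, ∑ y : ZMod p, y ^ (p - 1 - (s : ℕ)) * (v t * y ^ (t : ℕ))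
      = v t * if t = s then -1 else 0 := by
    intro t
    rw [← h1 t, Finset.mul_sum]
    exact Finset.sum_congr rfl fun y _ => by rw [pow_add]; ring
  simp [h2]

lemma pow_sub_two_eq_inv (p : ℕ) [Fact p.Prime] (hp3 : 3 < p) (t : ZMod p) :
    t ^ (p - 2) = t⁻¹ := by
  by_cases ht : t = 0
  · subst ht
    rw [zero_pow (by omega), inv_zero]
  · refine eq_inv_of_mul_eq_one_left ?_
    rw [← pow_succ, show p - 2 + 1 = p - 1 by omega, ZMod.pow_card_sub_one_eq_one ht]

/-- The power sum giving column `p - 1` is, as a function of `x`, a multiple of `x⁻²`. -/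
lemma sum_inv_form (p : ℕ) [Fact p.Prime] (hp3 : 3 < p) (c d x : ZMod p) :
    ∑ y : ZMod p, (x ^ 2 + c * x * y + d * y ^ 2)⁻¹
      = (∑ z : ZMod p, (1 + c * z + d * z ^ 2)⁻¹) * (x ^ 2)⁻¹ := by
  by_cases hx : x = 0
  · subst hx
    have h := FiniteField.sum_pow_lt_card_sub_one (ZMod p) 2 (by rw [ZMod.card]; omega)
    rw [← Equiv.sum_comp (Equiv.inv (ZMod p))] at h
    simp only [Equiv.inv_apply] at h
    have : ∀ y : ZMod p, (0 ^ 2 + c * 0 * y + d * y ^ 2)⁻¹ = d⁻¹ * y⁻¹ ^ 2 := by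
      intro y
      rw [inv_pow, ← mul_inv]; ring_nf
    rw [Finset.sum_congr rfl fun y _ => this y, ← Finset.mul_sum, h]
    simp
  · rw [← Equiv.sum_comp (Equiv.mulLeft₀ x hx), Finset.sum_mul]
    refine Finset.sum_congr rfl fun z _ => ?_
    rw [← mul_inv]
    congr 1
    simp only [Equiv.mulLeft₀_apply]
    ring

/-- The power sum giving column `(p - 3) / 2` vanishes: for `x ≠ 0` the substitution
`y ↦ x² / (d y)` changes its sign. -/
lemma sum_half_pow_mul_inv_form (p : ℕ) [Fact p.Prime] (hp3 : 3 < p) (c d x : ZMod p)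
    (hd : d ^ (p / 2) = -1) :
    ∑ y : ZMod p, y ^ (p / 2 + 1) * (x ^ 2 + c * x * y + d * y ^ 2)⁻¹ = 0 := by
  have hodd : p % 2 = 1 := (Fact.out : p.Prime).eq_two_or_odd.resolve_left (by omega)
  have hd0 : d ≠ 0 := by
    rintro rfl
    rw [zero_pow (by omega)] at hd
    exact one_ne_zero (neg_eq_zero.mp hd.symm)
  by_cases hx : x = 0
  · subst hx
    have h := FiniteField.sum_pow_lt_card_sub_one (ZMod p) (p / 2 - 1) (by rw [ZMod.card]; omega)
    have : ∀ y : ZMod p, y ^ (p / 2 + 1) * (0 ^ 2 + c * 0 * y + d * y ^ 2)⁻¹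
        = d⁻¹ * y ^ (p / 2 - 1) := by
      intro y
      by_cases hy : y = 0
      · subst hy
        have h1 : p / 2 - 1 ≠ 0 := by omega
        simp [h1]
      · rw [show p / 2 + 1 = (p / 2 - 1) + 2 by omega, pow_add]
        simp only [mul_zero, zero_mul, add_zero, zero_add, ne_eq, OfNat.ofNat_ne_zero,
          not_false_eq_true, zero_pow]
        field_simp
    rw [Finset.sum_congr rfl fun y _ => this y, ← Finset.mul_sum, h, mul_zero]
  · set S := ∑ y : ZMod p, y ^ (p / 2 + 1) * (x ^ 2 + c * x * y + d * y ^ 2)⁻¹ with hS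
    have ha : x ^ 2 * d⁻¹ ≠ 0 := mul_ne_zero (pow_ne_zero _ hx) (inv_ne_zero hd0)
    have hneg : S = -S := by
      conv_lhs => rw [hS,
        ← Equiv.sum_comp ((Equiv.inv (ZMod p)).trans (Equiv.mulLeft₀ (x ^ 2 * d⁻¹) ha))]
      rw [hS, ← Finset.sum_neg_distrib]
      refine Finset.sum_congr rfl fun y _ => ?_
      simp only [Equiv.trans_apply, Equiv.inv_apply, Equiv.mulLeft₀_apply]
      by_cases hy : y = 0
      · subst hy; simp
      have hform : x ^ 2 + c * x * (x ^ 2 * d⁻¹ * y⁻¹) + d * (x ^ 2 * d⁻¹ * y⁻¹) ^ 2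
          = (x ^ 2 * d⁻¹ * (y⁻¹) ^ 2) * (x ^ 2 + c * x * y + d * y ^ 2) := by
        field_simp; ring
      -- Fermat: the square classes `x²` and `y²` contribute `1` to the power `(p - 1) / 2`.
      have hx1 : (x ^ 2) ^ (p / 2) = 1 := by
        rw [← pow_mul, show 2 * (p / 2) = p - 1 by omega, ZMod.pow_card_sub_one_eq_one hx]
      have hy1 : (y ^ (p / 2)) ^ 2 = 1 := by
        rw [← pow_mul, mul_comm, show 2 * (p / 2) = p - 1 by omega,
          ZMod.pow_card_sub_one_eq_one hy]
      have hyi : (y ^ (p / 2))⁻¹ = y ^ (p / 2) :=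
        inv_eq_of_mul_eq_one_left (by rw [← sq, hy1])
      have hpow : (x ^ 2 * d⁻¹ * y⁻¹) ^ (p / 2) = - y ^ (p / 2) := by
        rw [mul_pow, mul_pow, hx1, inv_pow, inv_pow, hd, hyi, inv_neg, inv_one]; ring
      rw [hform, pow_succ, hpow, mul_inv]
      field_simp
      rw [pow_succ y (p / 2)]
    have h2 : (2 : ZMod p) ≠ 0 := by
      intro h
      have h' : ((2 : ℕ) : ZMod p) = 0 := by exact_mod_cast h
      rw [ZMod.natCast_eq_zero_iff] at h'
      have := Nat.le_of_dvd (by norm_num) h'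
      omega
    have : 2 * S = 0 := by linear_combination hneg
    exact (mul_eq_zero.mp this).resolve_left h2

theorem coefficient_matrix_rank (p : ℕ) (hp : p.Prime) (hp3 : 3 < p)
    (c d : ℤ) (hd : @legendreSym p ⟨hp⟩ d = -1)
    (C : Matrix (Fin p) (Fin p) (ZMod p))
    (hC : ∀ x y : ZMod p,
      (∑ r : Fin p, ∑ s : Fin p, C r s * x^(r : ℕ) * y^(s : ℕ))
        = (x^2 + (c : ZMod p) * x * y + (d : ZMod p) * y^2)^(p-2)) :
    C.rank ≤ p - 2 := by
  have : Fact p.Prime := ⟨hp⟩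
  have hodd : p % 2 = 1 := hp.eq_two_or_odd.resolve_left (by omega)
  have hd' : (d : ZMod p) ^ (p / 2) = -1 := by
    rw [← legendreSym.eq_pow, hd]; simp
  set F : ZMod p → Fin p → ZMod p := fun x s => ∑ r : Fin p, C r s * x ^ (r : ℕ) with hF
  have hC' : ∀ x y : ZMod p, ∑ s : Fin p, F x s * y ^ (s : ℕ)
      = (x ^ 2 + (c : ZMod p) * x * y + (d : ZMod p) * y ^ 2)⁻¹ := by
    intro x y
    rw [← pow_sub_two_eq_inv p hp3, ← hC, Finset.sum_comm]
    simp only [hF, Finset.sum_mul]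
  let z : Fin p := ⟨0, by omega⟩
  let l : Fin p := ⟨p - 1, by omega⟩
  let m : Fin p := ⟨p / 2 - 1, by omega⟩
  have hm : ∀ x, F x m = 0 := by
    intro x
    have h := sum_pow_mul_eval p hp3 (F x) m (by simp only [m]; omega)
    simp only [hC'] at h
    rw [show p - 1 - (m : ℕ) = p / 2 + 1 by simp only [m]; omega,
      sum_half_pow_mul_inv_form p hp3 _ _ x hd'] at h
    exact neg_eq_zero.mp h.symm
  have hz : ∀ x, F x z = (x ^ 2)⁻¹ := by
    intro x
    have h := hC' x 0
    rw [Finset.sum_eq_single z] at h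
    · simpa [z] using h
    · intro s _ hs
      have : (s : ℕ) ≠ 0 := fun h0 => hs (Fin.ext h0)
      simp [this]
    · simp
  set K : ZMod p := ∑ z : ZMod p, (1 + (c : ZMod p) * z + (d : ZMod p) * z ^ 2)⁻¹
  have hl : ∀ x, F x l = -K * F x z := by
    intro x
    have h := sum_pow_mul_eval p hp3 (F x) l (by simp only [l]; omega)
    simp only [hC'] at h
    rw [show p - 1 - (l : ℕ) = 0 by simp only [l]; omega] at h
    simp only [pow_zero, one_mul] at h
    rw [sum_inv_form p hp3] at h
    rw [hz]
    linear_combination h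
  have hcolm : C.col m = 0 := coeff_eq_zero_of_forall_eval p _ hm
  have hcoll : C.col l = -K • C.col z := by
    rw [← sub_eq_zero]
    refine coeff_eq_zero_of_forall_eval p _ fun x => ?_
    have h := hl x
    rw [← sub_eq_zero] at h
    rw [← h]
    simp only [hF, Finset.mul_sum, ← Finset.sum_sub_distrib]
    refine Finset.sum_congr rfl fun r _ => ?_
    simp only [Matrix.col, Pi.sub_apply, Pi.smul_apply, smul_eq_mul, Matrix.transpose_apply]
    ring
  have hml : m ≠ l := by
    intro h
    have := congrArg Fin.val h
    simp only [m, l] at this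
    omega
  have hzm : z ≠ m := by
    intro h
    have := congrArg Fin.val h
    simp only [m, z] at this
    omega
  have hzl : z ≠ l := by
    intro h
    have := congrArg Fin.val h
    simp only [l, z] at this
    omega
  let T : Finset (Fin p) := Finset.univ \ {m, l}
  have hT : T.card = p - 2 := by
    rw [Finset.card_sdiff_of_subset (Finset.subset_univ _), Finset.card_pair hml]
    simp
  have hmemT : ∀ s, s ∈ T ↔ s ≠ m ∧ s ≠ l := by simp [T]
  rw [Matrix.rank_eq_finrank_span_cols]
  have hspan : Submodule.span (ZMod p) (Set.range C.col)
      ≤ Submodule.span (ZMod p) ((T.image C.col : Finset (Fin p → ZMod p)) : Set _) := by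
    rw [Submodule.span_le]
    have hin : ∀ s ∈ T, C.col s ∈
        Submodule.span (ZMod p) ((T.image C.col : Finset (Fin p → ZMod p)) : Set _) :=
      fun s hs => Submodule.subset_span (Finset.mem_coe.mpr (Finset.mem_image_of_mem _ hs))
    rintro _ ⟨s, rfl⟩
    by_cases h1 : s = m
    · rw [h1, hcolm]; exact Submodule.zero_mem _
    by_cases h2 : s = l
    · rw [h2, hcoll]
      exact Submodule.smul_mem _ _ (hin z ((hmemT z).mpr ⟨hzm, hzl⟩))
    exact hin s ((hmemT s).mpr ⟨h1, h2⟩)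
  calc _ ≤ _ := Submodule.finrank_mono hspan
    _ ≤ (T.image C.col).card := finrank_span_finset_le_card _
    _ ≤ T.card := Finset.card_image_le
    _ = p - 2 := hT
end

section
/- Let n ≥ 2 be an integer and let c, d be integers. Set V_n = ∏_{0 ≤ r < s ≤ n-1} (s − r). Then V_n² divides the determinant of the n×n integer matrix whose (i,j) entry (for 0 ≤ i, j ≤ n-1) is (i² + c·i·j + d·j²)^(n-2). -/
/-!
Let `V` be the Vandermonde matrix of the nodes `0, …, n - 1`; its determinant is `V_n`. It suffices
to write the given matrix as `V * C * Vᵀ` with `C` an integer matrix. Multiplication by the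
coordinate function preserves the column span of `V`: because `p = ∏ (X - r)` is monic of degree
`n`, every integer polynomial agrees on the nodes with its remainder modulo `p`, so
`diagonal v * V = V * W` for an integer matrix `W`. Consequently matrices of the form `V * C * Vᵀ`
are closed under entrywise multiplication by any integer polynomial in the row and column nodes.
They include the all-ones matrix, hence also the matrix with entries `(i² + c i j + d j²) ^ k` for
every `k`.
-/

open Matrix Polynomial in
/-- Reduction modulo the monic polynomial vanishing at all nodes: multiplication by the coordinate
function acts on the monomials of degree less than `n` through an integer matrix. -/
lemma exists_diagonal_mul_vandermonde (n : ℕ) (v : Fin n → ℤ) :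
    ∃ W : Matrix (Fin n) (Fin n) ℤ, diagonal v * vandermonde v = vandermonde v * W := by
  set p : ℤ[X] := ∏ r : Fin n, (X - C (v r)) with hp
  have hmonic : p.Monic := monic_prod_of_monic _ _ fun r _ => monic_X_sub_C (v r)
  have hdeg : p.natDegree = n := by
    rw [hp, natDegree_finsetProd_X_sub_C_eq_card, Finset.card_univ, Fintype.card_fin]
  have hroot : ∀ i, p.eval (v i) = 0 := fun i => by
    rw [hp, eval_prod]
    exact Finset.prod_eq_zero (Finset.mem_univ i) (by simp)
  refine ⟨of fun l m => ((X ^ (m.val + 1) : ℤ[X]) %ₘ p).coeff l, ?_⟩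
  ext i m
  have hn : 0 < n := i.pos
  have hlt : ((X ^ (m.val + 1) : ℤ[X]) %ₘ p).natDegree < n := by
    have h1 : p ≠ 1 := by
      intro h
      rw [h, natDegree_one] at hdeg
      omega
    exact (natDegree_modByMonic_lt _ hmonic h1).trans_eq hdeg
  have heval : ((X ^ (m.val + 1) : ℤ[X]) %ₘ p).eval (v i) = v i ^ (m.val + 1) := by
    have h := congrArg (eval (v i)) (modByMonic_add_div (X ^ (m.val + 1) : ℤ[X]) p)
    simpa [hroot i] using h
  rw [diagonal_mul, vandermonde_apply, mul_apply, ← pow_succ', ← heval,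
    eval_eq_sum_range' hlt, Finset.sum_range]
  simp [vandermonde_apply, mul_comm]

open Matrix in
/-- The induction step multiplies the entries by `i² + c i j + d j²`, which replaces the middle
factor `C` by `W² C + c W C Wᵀ + d C (Wᵀ)²`. -/
lemma exists_vandermonde_mul_mul_transpose (n : ℕ) (v : Fin n → ℤ) (c d : ℤ) (k : ℕ) :
    ∃ C : Matrix (Fin n) (Fin n) ℤ,
      (of fun i j => (v i ^ 2 + c * v i * v j + d * v j ^ 2) ^ k) =
        vandermonde v * C * (vandermonde v)ᵀ := by
  obtain ⟨W, hW⟩ := exists_diagonal_mul_vandermonde n v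
  have hWt : (vandermonde v)ᵀ * diagonal v = Wᵀ * (vandermonde v)ᵀ := by
    simpa [transpose_mul] using congrArg transpose hW
  induction k with
  | zero =>
    -- Only the constant monomial `x⁰ y⁰` contributes to the all-ones matrix.
    refine ⟨of fun l m => if l.val = 0 ∧ m.val = 0 then 1 else 0, ?_⟩
    ext i j
    have : NeZero n := ⟨i.pos.ne'⟩
    simp [mul_apply, vandermonde_apply, Fin.val_eq_zero_iff, ite_and]
  | succ k ih =>
    obtain ⟨C, hC⟩ := ih
    set V := vandermonde v
    set D := diagonal v
    refine ⟨W * W * C + c • (W * C * Wᵀ) + d • (C * Wᵀ * Wᵀ), ?_⟩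
    have hstep : (of fun i j => (v i ^ 2 + c * v i * v j + d * v j ^ 2) ^ (k + 1)) =
        D * (D * (V * C * Vᵀ)) + c • (D * (V * C * Vᵀ) * D) + d • (V * C * Vᵀ * D * D) := by
      rw [← hC]
      ext i j
      simp only [D, Matrix.add_apply, Matrix.smul_apply, diagonal_mul, mul_diagonal, of_apply, smul_eq_mul]
      ring
    have hL : ∀ M, D * (V * M) = V * (W * M) := fun M => by
      rw [← Matrix.mul_assoc, hW, Matrix.mul_assoc]
    rw [hstep]
    simp only [Matrix.mul_add, Matrix.add_mul, Matrix.mul_smul, Matrix.smul_mul]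
    congr 1
    · congr 1
      · simp only [Matrix.mul_assoc, hL]
      · simp only [Matrix.mul_assoc, hL, hWt]
    · rw [Matrix.mul_assoc (V * C), hWt, ← Matrix.mul_assoc, Matrix.mul_assoc _ Vᵀ, hWt]
      simp only [Matrix.mul_assoc]

theorem vandermonde_square_divides_Dn (n : ℕ) (hn : 2 ≤ n) (c d : ℤ) :
    (∏ q ∈ Finset.univ.filter (fun q : Fin n × Fin n => q.1 < q.2),
        ((q.2.val : ℤ) - q.1.val))^2 ∣
      (Matrix.of fun i j : Fin n =>
        ((i.val : ℤ)^2 + c * i.val * j.val + d * (j.val : ℤ)^2)^(n-2)).det := by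
  obtain ⟨C, hC⟩ :=
    exists_vandermonde_mul_mul_transpose n (fun i => (i.val : ℤ)) c d (n - 2)
  have hV : (∏ q ∈ Finset.univ.filter (fun q : Fin n × Fin n => q.1 < q.2),
      ((q.2.val : ℤ) - q.1.val)) = (Matrix.vandermonde fun i : Fin n => (i.val : ℤ)).det := by
    rw [Matrix.det_vandermonde, Finset.prod_filter, Fintype.prod_prod_type]
    refine Finset.prod_congr rfl fun i _ => ?_
    rw [← Finset.prod_filter]
    exact Finset.prod_congr (by ext j; simp) fun _ _ => rfl
  rw [hV, hC, Matrix.det_mul, Matrix.det_mul, Matrix.det_transpose]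
  exact ⟨C.det, by ring⟩
end

section
/- Let n > 1 be a composite integer and let p be a prime dividing n. Then the p-adic valuation of the integer V_n = ∏_{0 ≤ r < s ≤ n-1} (s − r) is at least n − p. -/
/-! The `n - p` pairs `(r, r + p)` with `0 ≤ r < n - p` all occur in the product, and each contributes
the factor `p`. Hence `p ^ (n - p)` divides the (nonzero) product. -/

theorem valuation_of_Vn (n : ℕ) (hn : 1 < n) (hcomp : ¬ n.Prime)
    (p : ℕ) (hp : p.Prime) (hdvd : p ∣ n) :
    n - p ≤ padicValInt p
      (∏ q ∈ (Finset.range n ×ˢ Finset.range n).filter (fun q => q.1 < q.2),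
        ((q.2 : ℤ) - q.1)) := by
  have hfact : Fact p.Prime := ⟨hp⟩
  have hpos := hp.pos
  have hsub : (Finset.range (n - p)).image (fun r => (r, r + p)) ⊆
      (Finset.range n ×ˢ Finset.range n).filter (fun q => q.1 < q.2) := by
    intro q hq
    simp only [Finset.mem_image, Finset.mem_range] at hq
    obtain ⟨r, hr, rfl⟩ := hq
    simp only [Finset.mem_filter, Finset.mem_product, Finset.mem_range]
    omega
  have hprod : ∏ q ∈ (Finset.range (n - p)).image (fun r => (r, r + p)),
      ((q.2 : ℤ) - q.1) = (p : ℤ) ^ (n - p) := by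
    rw [Finset.prod_image (fun a _ b _ h => (Prod.mk.inj h).1)]
    simp
  have hdiv := Finset.prod_dvd_prod_of_subset _ _ (fun q : ℕ × ℕ => (q.2 : ℤ) - q.1) hsub
  rw [hprod] at hdiv
  refine ((padicValInt_dvd_iff _ _).1 hdiv).resolve_left (Finset.prod_ne_zero_iff.2 ?_)
  intro q hq
  have := (Finset.mem_filter.1 hq).2
  omega
end

section
/- Let p ≥ 3 be a prime and let c, d be integers with Legendre symbol (d/p) = -1 (c and d are identified with their residues in 𝔽_p). Let m = (p-3)/2. For every t in the multiplicative group 𝔽_p^×, writing u = d/t (an element of 𝔽_p^× since d ≠ 0 in 𝔽_p), one has (u² + c·u + d)^(p-2) · u^(−m) = − (t² + c·t + d)^(p-2) · t^(−m) in 𝔽_p, where negative powers are taken in 𝔽_p^×. -/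
/-!
With `Q(x) = x² + c x + d` one has `Q(d/t) = (d/t²) Q(t)`. Writing `p = 2m + 3`, the left side
is therefore `d^(m+1) · t^(-(2m+2))` times `Q(t)^(p-2) · t^(-m)`. Here
`d^(m+1) = d^((p-1)/2) = -1` by Euler's criterion and `t^(2m+2) = t^(p-1) = 1` by Fermat.
-/

theorem involution_sign_flip (p : ℕ) (hp : p.Prime) (hp3 : 3 ≤ p)
    (c d : ℤ) (hd : @legendreSym p ⟨hp⟩ d = -1)
    (t : ZMod p) (ht : t ≠ 0) :
    (((d : ZMod p) * t⁻¹)^2 + (c : ZMod p) * ((d : ZMod p) * t⁻¹) + (d : ZMod p))^(p-2)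
        * ((((d : ZMod p) * t⁻¹))^((p-3)/2))⁻¹
      = -((t^2 + (c : ZMod p) * t + (d : ZMod p))^(p-2) * (t^((p-3)/2))⁻¹) := by
  have : Fact p.Prime := ⟨hp⟩
  obtain ⟨m, hm⟩ : ∃ m, p = 2 * m + 3 := by
    obtain ⟨k, hk⟩ := hp.odd_of_ne_two (by omega)
    exact ⟨k - 1, by omega⟩
  have euler : (d : ZMod p) ^ (m + 1) = -1 := by
    have h := legendreSym.eq_pow p d
    rw [hd, show p / 2 = m + 1 by omega] at h
    simpa using h.symm
  have fermat : t ^ (2 * m + 2) = 1 := by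
    have h := ZMod.pow_card_sub_one_eq_one ht
    rwa [show p - 1 = 2 * m + 2 by omega] at h
  have hd0 : (d : ZMod p) ≠ 0 := by
    intro h
    simp [h] at euler
  have hQ : ((d : ZMod p) * t⁻¹)^2 + (c : ZMod p) * ((d : ZMod p) * t⁻¹) + (d : ZMod p)
      = d * (t⁻¹)^2 * (t^2 + (c : ZMod p) * t + (d : ZMod p)) := by
    field_simp
    ring
  rw [hQ, show p - 2 = 2 * m + 1 by omega, show (p - 3) / 2 = m by omega]
  generalize t^2 + (c : ZMod p) * t + (d : ZMod p) = q
  have hdm : (d : ZMod p) ^ (2 * m + 1) = -(d : ZMod p) ^ m := by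
    rw [show 2 * m + 1 = m + (m + 1) by ring, pow_add, euler]
    ring
  have htm : (t ^ 2) ^ (2 * m + 1) = t ^ m * t ^ m := by
    rw [← pow_mul, show 2 * (2 * m + 1) = m + m + (2 * m + 2) by ring, pow_add, fermat, mul_one,
      pow_add]
  have hdm0 : (d : ZMod p) ^ m ≠ 0 := pow_ne_zero _ hd0
  have htm0 : t ^ m ≠ 0 := pow_ne_zero _ ht
  rw [mul_pow, mul_pow, inv_pow, inv_pow, htm, hdm, mul_pow, inv_pow]
  generalize (d : ZMod p) ^ m = x at *
  generalize t ^ m = y at *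
  field_simp
end

section
/- Let p ≥ 3 be a prime and let c, d be integers with Legendre symbol (d/p) = -1 (c and d are identified with their residues in 𝔽_p). Let m = (p-3)/2. Then the sum Σ_{t ∈ 𝔽_p^×} (t² + c·t + d)^(p-2) · t^(−m) equals 0 in 𝔽_p, where t^(−m) denotes the inverse of t^m in 𝔽_p^×. -/
/-! The involution `t ↦ d / t` of `𝔽_p^×` changes the sign of every summand. With `p = 2m + 3` and
`f(t) = t² + c t + d` one has `f(d/t) = (d/t²) f(t)`, so the summand at `d/t` equals
`d^(m+1) · f(t)^(2m+1) · t^(-(3m+2))`. Here `d^(m+1) = (d/p) = -1` by Euler's criterion and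
`t^(2m+2) = 1` by Fermat's little theorem. The sum is thus its own negative, and it vanishes since
`p` is odd. -/

/-- The summand is odd under `t ↦ d / t`, over any field in which `d^(m+1) = -1` and
`t^(2m+2) = 1`. -/
lemma summand_involution {K : Type*} [Field K] (m : ℕ) (c d t : K) (ht : t ≠ 0) (hd0 : d ≠ 0)
    (hd : d ^ (m + 1) = -1) (h1 : t ^ (2 * m + 2) = 1) :
    ((d / t) ^ 2 + c * (d / t) + d) ^ (2 * m + 1) * ((d / t) ^ m)⁻¹ =
      -((t ^ 2 + c * t + d) ^ (2 * m + 1) * (t ^ m)⁻¹) := by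
  have hf : (d / t) ^ 2 + c * (d / t) + d = d / t ^ 2 * (t ^ 2 + c * t + d) := by
    field_simp
    ring
  have hcoef : (d / t ^ 2) ^ (2 * m + 1) * ((d / t) ^ m)⁻¹ = -(t ^ m)⁻¹ := by
    have e1 : d ^ (2 * m + 1) = -d ^ m := by
      rw [show 2 * m + 1 = (m + 1) + m by ring, pow_add, hd]
      ring
    have e2 : (t ^ 2) ^ (2 * m + 1) = t ^ m * t ^ m := by
      calc (t ^ 2) ^ (2 * m + 1) = t ^ (2 * m + 2) * (t ^ m * t ^ m) := by ring
        _ = t ^ m * t ^ m := by rw [h1, one_mul]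
    rw [div_pow, div_pow, e1, e2]
    field_simp
  rw [hf, mul_pow, mul_right_comm, hcoef]
  ring

theorem character_sum_vanishes (p : ℕ) [NeZero p] (hp : p.Prime) (hp3 : 3 ≤ p)
    (c d : ℤ) (hd : @legendreSym p ⟨hp⟩ d = -1) :
    ∑ t ∈ Finset.univ.filter (fun t : ZMod p => t ≠ 0),
        (t^2 + (c : ZMod p) * t + (d : ZMod p))^(p-2) * (t^((p-3)/2))⁻¹ = 0 := by
  have : Fact p.Prime := ⟨hp⟩
  obtain ⟨m, hm⟩ : ∃ m, p = 2 * m + 3 := by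
    have hodd := hp.odd_of_ne_two (by omega)
    obtain ⟨k, hk⟩ := hodd
    exact ⟨k - 1, by omega⟩
  have e1 : p - 2 = 2 * m + 1 := by omega
  have e2 : (p - 3) / 2 = m := by omega
  have hdm : (d : ZMod p) ^ (m + 1) = -1 := by
    have h := legendreSym.eq_pow p d
    rw [hd, show p / 2 = m + 1 by omega] at h
    rw [← h]
    norm_num
  have hd0 : (d : ZMod p) ≠ 0 := by
    intro h0
    rw [h0, zero_pow (Nat.succ_ne_zero m)] at hdm
    simp at hdm
  rw [e1, e2]
  set S := ∑ t ∈ Finset.univ.filter (fun t : ZMod p => t ≠ 0),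
    (t^2 + (c : ZMod p) * t + (d : ZMod p))^(2 * m + 1) * (t^m)⁻¹ with hS
  have hneg : -S = S := by
    rw [hS, ← Finset.sum_neg_distrib]
    refine Finset.sum_nbij' (fun t => (d : ZMod p) / t) (fun t => (d : ZMod p) / t) ?_ ?_ ?_ ?_ ?_
    · intro t ht
      simpa [hd0] using ht
    · intro t ht
      simpa [hd0] using ht
    · intro t _
      exact div_div_cancel₀ hd0
    · intro t _
      exact div_div_cancel₀ hd0
    · intro t ht
      have ht0 : t ≠ 0 := by simpa using ht
      refine (summand_involution m (c : ZMod p) (d : ZMod p) t ht0 hd0 hdm ?_).symm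
      rw [show 2 * m + 2 = p - 1 by omega]
      exact ZMod.pow_card_sub_one_eq_one ht0
  have h2 : (2 : ZMod p) ≠ 0 :=
    Ring.two_ne_zero (by rw [ZMod.ringChar_zmod_n]; omega)
  have h : (2 : ZMod p) * S = 0 := by linear_combination -hneg
  exact (mul_eq_zero.mp h).resolve_left h2
end
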